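/- If H is a 3-uniform hypergraph with maximum degree Δ(H) ≤ 2, then τ_g(H) ≤ (3/10)(n(H) + m(H)). -/

import Mathlib

variable {V : Type} [Fintype V] [DecidableEq V]

/-- The set of legal moves in the transversal game with uncovered edge set `E`:
the vertices hitting at least one uncovered edge. -/
def playable (E : Finset (Finset V)) : Finset V :=
  Finset.univ.filter (fun v => ∃ e ∈ E, v ∈ e)

/-- The number of moves remaining in the transversal game with uncovered edge set `E`
under optimal play, where `ehTurn = true` iff Edge-hitter (the minimizer) moves next;
Staller (the maximizer) moves next iff `ehTurn = false`.  Each move must hit at least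
one uncovered edge, and the game ends when no uncovered edge remains. -/
def gameVal (ehTurn : Bool) (E : Finset (Finset V)) : ℕ :=
  if h : (playable E).Nonempty then
    1 +
      (if ehTurn then
        (playable E).attach.inf' (Finset.attach_nonempty_iff.mpr h)
          (fun v => gameVal (!ehTurn) (E.filter (fun e => v.1 ∉ e)))
      else
        (playable E).attach.sup' (Finset.attach_nonempty_iff.mpr h)
          (fun v => gameVal (!ehTurn) (E.filter (fun e => v.1 ∉ e))))
  else 0
termination_by E.card
decreasing_by
  all_goals
    obtain ⟨v, hv⟩ := v
    simp only [playable, Finset.mem_filter, Finset.mem_univ, true_and] at hv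
    obtain ⟨e, he, hve⟩ := hv
    exact Finset.card_lt_card (Finset.filter_ssubset.mpr ⟨e, he, by simp [hve]⟩)

/-- The game transversal number `τ_g`: Edge-hitter makes the first move. -/
def gameTransversalNum (E : Finset (Finset V)) : ℕ := gameVal true E

/-- The Staller-start game transversal number `τ_g'`: Staller makes the first move. -/
def stallerGameTransversalNum (E : Finset (Finset V)) : ℕ := gameVal false E

/-- The transversal number `τ`: the minimum size of a set of vertices meeting all edges. -/
noncomputable def transversalNum (E : Finset (Finset V)) : ℕ :=
  sInf {n | ∃ T : Finset V, (∀ e ∈ E, ∃ v ∈ T, v ∈ e) ∧ T.card = n}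

/-- The vertices of degree two. -/
def degTwo (E : Finset (Finset V)) : Finset V :=
  Finset.univ.filter (fun v => (E.filter (fun e => v ∈ e)).card = 2)

lemma sum_inter_card (E : Finset (Finset V)) (Q : Finset V) :
    ∑ e ∈ E, (Q ∩ e).card = ∑ v ∈ Q, (E.filter (fun e => v ∈ e)).card := by
  have h := Finset.sum_card_bipartiteAbove_eq_sum_card_bipartiteBelow
    (s := E) (t := Q) (fun e v => v ∈ e)
  simp only [Finset.bipartiteAbove, Finset.bipartiteBelow] at h
  rw [← h]
  refine Finset.sum_congr rfl fun e _ => ?_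
  congr 1

lemma sum_degTwo (E : Finset (Finset V)) :
    ∑ e ∈ E, (degTwo E ∩ e).card = 2 * (degTwo E).card := by
  rw [sum_inter_card, Finset.sum_congr rfl (g := fun _ => 2)]
  · simp [mul_comm]
  · intro v hv
    simpa [degTwo] using hv

lemma two_degTwo_le (E : Finset (Finset V)) (h3 : ∀ e ∈ E, e.card = 3) :
    2 * (degTwo E).card ≤ 3 * E.card := by
  rw [← sum_degTwo, mul_comm 3, ← smul_eq_mul, ← Finset.sum_const]
  refine Finset.sum_le_sum fun e he => ?_
  rw [← h3 e he]
  exact Finset.card_le_card Finset.inter_subset_right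

lemma three_card_le (E : Finset (Finset V)) (h3 : ∀ e ∈ E, e.card = 3)
    (hΔ : ∀ v : V, (E.filter (fun e => v ∈ e)).card ≤ 2) :
    3 * E.card ≤ Fintype.card V + (degTwo E).card := by
  have h := sum_inter_card E Finset.univ
  have h1 : ∑ e ∈ E, (Finset.univ ∩ e).card = 3 * E.card := by
    rw [Finset.sum_congr rfl (g := fun _ => 3)]
    · simp [mul_comm]
    · intro e he; simpa using h3 e he
  have h2 : ∑ v : V, (E.filter (fun e => v ∈ e)).card
      ≤ ∑ v : V, (1 + if (E.filter (fun e => v ∈ e)).card = 2 then 1 else 0) := by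
    refine Finset.sum_le_sum fun v _ => ?_
    have := hΔ v
    split_ifs <;> omega
  rw [Finset.sum_add_distrib, ← Finset.card_filter] at h2
  simp only [Finset.sum_const, Finset.card_univ, smul_eq_mul, mul_one] at h2
  have h4 : (degTwo E).card
    = (Finset.univ.filter (fun v => (E.filter (fun e => v ∈ e)).card = 2)).card := rfl
  omega

lemma card_split (E : Finset (Finset V)) (v : V) :
    (E.filter (fun e => v ∈ e)).card + (E.filter (fun e => v ∉ e)).card = E.card :=
  Finset.card_filter_add_card_filter_not _

/-- Vertices of degree two outside the edges hit keep degree two. -/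
lemma degTwo_move (E : Finset (Finset V)) (v : V) (U : Finset V)
    (hU : ∀ e ∈ E, v ∈ e → e ⊆ U) :
    (degTwo E).card ≤ (degTwo (E.filter (fun e => v ∉ e))).card + (degTwo E ∩ U).card := by
  have hsub : degTwo E \ U ⊆ degTwo (E.filter (fun e => v ∉ e)) := by
    intro w hw
    simp only [degTwo, Finset.mem_sdiff, Finset.mem_filter, Finset.mem_univ, true_and] at hw ⊢
    rw [← hw.1, Finset.filter_filter]
    congr 1
    refine Finset.filter_congr fun e he => ?_
    constructor
    · exact fun h => h.2
    · exact fun h => ⟨fun hv => hw.2 (hU e he hv h), h⟩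
  have := Finset.card_le_card hsub
  have h2 := Finset.card_sdiff_add_card_inter (degTwo E) U
  omega

/-- The hit edges at a vertex of degree two. -/
lemma degTwo_spec {E : Finset (Finset V)} {v : V} (h3 : ∀ e ∈ E, e.card = 3)
    (hv : (E.filter (fun e => v ∈ e)).card = 2) :
    ∃ U : Finset V, (∀ e ∈ E, v ∈ e → e ⊆ U) ∧ U.card ≤ 5 := by
  obtain ⟨e, f, hef, h⟩ := Finset.card_eq_two.mp hv
  have he : e ∈ E ∧ v ∈ e := by
    have : e ∈ E.filter (fun e => v ∈ e) := by rw [h]; simp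
    simpa using this
  have hf : f ∈ E ∧ v ∈ f := by
    have : f ∈ E.filter (fun e => v ∈ e) := by rw [h]; simp
    simpa using this
  refine ⟨e ∪ f, ?_, ?_⟩
  · intro g hg hvg
    have : g ∈ E.filter (fun e => v ∈ e) := by simp [hg, hvg]
    rw [h] at this
    simp only [Finset.mem_insert, Finset.mem_singleton] at this
    rcases this with rfl | rfl
    · exact Finset.subset_union_left
    · exact Finset.subset_union_right
  · have h1 := Finset.card_union_add_card_inter e f
    have h2 : 0 < (e ∩ f).card := Finset.card_pos.mpr ⟨v, by simp [he.2, hf.2]⟩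
    have h4 := h3 e he.1
    have h5 := h3 f hf.1
    omega

/-- Every legal move decreases `6m - q` by at least four. -/
lemma staller_drop {E : Finset (Finset V)} (h3 : ∀ e ∈ E, e.card = 3)
    (hΔ : ∀ v : V, (E.filter (fun e => v ∈ e)).card ≤ 2) {v : V} (hv : v ∈ playable E) :
    6 * (E.filter (fun e => v ∉ e)).card + (degTwo E).card + 4
      ≤ 6 * E.card + (degTwo (E.filter (fun e => v ∉ e))).card := by
  have hs := card_split E v
  obtain ⟨e, he, hve⟩ : ∃ e ∈ E, v ∈ e := by simpa [playable] using hv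
  have hpos : 0 < (E.filter (fun e => v ∈ e)).card :=
    Finset.card_pos.mpr ⟨e, by simp [he, hve]⟩
  by_cases h2 : (E.filter (fun e => v ∈ e)).card = 2
  · obtain ⟨U, hU, hc⟩ := degTwo_spec h3 h2
    have h1 := degTwo_move E v U hU
    have h4 : (degTwo E ∩ U).card ≤ U.card := Finset.card_le_card Finset.inter_subset_right
    omega
  · have h1 : (E.filter (fun e => v ∈ e)).card = 1 := by have := hΔ v; omega
    have h4 := degTwo_move E v e (by
      intro g hg hvg
      have := Finset.card_le_one.mp h1.le e (by simp [he, hve]) g (by simp [hg, hvg])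
      rw [this])
    have h5 : (degTwo E ∩ e).card ≤ (e.erase v).card := by
      refine Finset.card_le_card fun w hw => ?_
      rw [Finset.mem_inter] at hw
      refine Finset.mem_erase.mpr ⟨?_, hw.2⟩
      rintro rfl
      exact h2 (by simpa [degTwo] using hw.1)
    rw [Finset.card_erase_of_mem hve, h3 e he] at h5
    omega

lemma gameVal_true_le {E : Finset (Finset V)} {v : V} (hv : v ∈ playable E) :
    gameVal true E ≤ 1 + gameVal false (E.filter (fun e => v ∉ e)) := by
  rw [gameVal, dif_pos ⟨v, hv⟩]
  simp only [if_true, Bool.not_true]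
  exact Nat.add_le_add_left (Finset.inf'_le (b := ⟨v, hv⟩)
    (fun v : {x // x ∈ playable E} => gameVal false (E.filter (fun e => v.1 ∉ e)))
    (Finset.mem_attach _ _)) 1

lemma gameVal_false_cases (E : Finset (Finset V)) :
    gameVal false E = 0 ∨ ∃ v ∈ playable E,
      gameVal false E = 1 + gameVal true (E.filter (fun e => v ∉ e)) := by
  by_cases h : (playable E).Nonempty
  · right
    rw [gameVal, dif_pos h]
    obtain ⟨v, -, hv⟩ := Finset.exists_mem_eq_sup' (Finset.attach_nonempty_iff.mpr h)
      (fun v : {x // x ∈ playable E} => gameVal true (E.filter (fun e => v.1 ∉ e)))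
    refine ⟨v.1, v.2, ?_⟩
    simpa using hv
  · left
    rw [gameVal, dif_neg h]

lemma card_move_lt {E : Finset (Finset V)} {v : V} (hv : v ∈ playable E) :
    (E.filter (fun e => v ∉ e)).card + 1 ≤ E.card := by
  have hs := card_split E v
  obtain ⟨e, he, hve⟩ : ∃ e ∈ E, v ∈ e := by simpa [playable] using hv
  have hpos : 0 < (E.filter (fun e => v ∈ e)).card :=
    Finset.card_pos.mpr ⟨e, by simp [he, hve]⟩
  omega

lemma gameVal_le_card (k : ℕ) : ∀ (E : Finset (Finset V)), E.card ≤ k → ∀ b : Bool,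
    gameVal b E ≤ E.card := by
  induction k with
  | zero =>
    intro E hE b
    have : E = ∅ := Finset.card_eq_zero.mp (by omega)
    subst this
    rw [gameVal, dif_neg (by simp [playable])]
    simp
  | succ k ih =>
    intro E hE b
    cases b with
    | true =>
      by_cases h : (playable E).Nonempty
      · obtain ⟨v, hv⟩ := h
        have h1 := gameVal_true_le hv
        have h2 := card_move_lt hv
        have h4 := ih (E.filter (fun e => v ∉ e)) (by omega) false
        omega
      · rw [gameVal, dif_neg h]; omega
    | false =>
      rcases gameVal_false_cases E with h | ⟨v, hv, h⟩
      · omega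
      · have h2 := card_move_lt hv
        have h4 := ih (E.filter (fun e => v ∉ e)) (by omega) true
        omega

lemma main_bound (k : ℕ) : ∀ (E : Finset (Finset V)), E.card ≤ k →
    (∀ e ∈ E, e.card = 3) → (∀ v : V, (E.filter (fun e => v ∈ e)).card ≤ 2) →
    6 * gameVal true E + (degTwo E).card ≤ 6 * E.card := by
  induction k with
  | zero =>
    intro E hE h3 _
    have := gameVal_le_card 0 E hE true
    have := two_degTwo_le E h3
    omega
  | succ k ih =>
    intro E hE h3 hΔ
    have sub3 : ∀ {E : Finset (Finset V)} (v : V), (∀ e ∈ E, e.card = 3) →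
        ∀ e ∈ E.filter (fun e => v ∉ e), e.card = 3 :=
      fun v h e he => h e (Finset.mem_filter.mp he).1
    have subΔ : ∀ {E : Finset (Finset V)} (v : V),
        (∀ v : V, (E.filter (fun e => v ∈ e)).card ≤ 2) →
        ∀ w : V, ((E.filter (fun e => v ∉ e)).filter (fun e => w ∈ e)).card ≤ 2 :=
      fun v h w => (Finset.card_le_card
        (Finset.filter_subset_filter _ (Finset.filter_subset _ _))).trans (h w)
    -- a round in which Edge-hitter plays a vertex of degree two
    have round : ∀ (v : V) (U : Finset V), v ∈ degTwo E → (∀ e ∈ E, v ∈ e → e ⊆ U) →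
        (degTwo E ∩ U).card ≤ 5 →
        6 * gameVal true E + (degTwo E).card + 4 ≤ 6 * E.card + (degTwo E ∩ U).card := by
      intro v U hv hU hc
      have hd : (E.filter (fun e => v ∈ e)).card = 2 := by simpa [degTwo] using hv
      have hvp : v ∈ playable E := by
        obtain ⟨e, he⟩ := Finset.card_pos.mp (show 0 < (E.filter (fun e => v ∈ e)).card by omega)
        simp only [playable, Finset.mem_filter, Finset.mem_univ, true_and] at he ⊢
        exact ⟨e, he⟩
      have h1 := gameVal_true_le hvp
      have h2 := card_split E v
      have h4 := degTwo_move E v U hU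
      have h5 := two_degTwo_le _ (sub3 v h3)
      rcases gameVal_false_cases (E.filter (fun e => v ∉ e)) with h | ⟨w, hw, h⟩
      · -- the game is over after this move
        by_cases h6 : 4 ≤ 6 * (E.filter (fun e => v ∉ e)).card + (degTwo E ∩ U).card
        · omega
        · omega
      · have h6 := staller_drop (sub3 v h3) (subΔ v hΔ) hw
        have h7 := card_move_lt hw
        have h8 := ih _ (by omega) (sub3 w (sub3 v h3)) (subΔ w (subΔ v hΔ))
        omega
    by_cases hQ : (degTwo E).Nonempty
    · by_cases hA : ∃ v ∈ degTwo E, ∃ e ∈ E, v ∈ e ∧ ∃ x ∈ e, x ∉ degTwo E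
      · obtain ⟨v, hv, e, he, hve, x, hx, hxQ⟩ := hA
        obtain ⟨U, hU, hc⟩ := degTwo_spec h3 (by simpa [degTwo] using hv)
        have h4 : (degTwo E ∩ U).card ≤ (U.erase x).card := by
          refine Finset.card_le_card fun w hw => ?_
          rw [Finset.mem_inter] at hw
          refine Finset.mem_erase.mpr ⟨?_, hw.2⟩
          rintro rfl
          exact hxQ hw.1
        rw [Finset.card_erase_of_mem (hU e he hve hx)] at h4
        have := round v U hv hU (by omega)
        omega
      · push Not at hA
        obtain ⟨v, hv⟩ := hQ
        obtain ⟨U, hU, hc⟩ := degTwo_spec h3 (by simpa [degTwo] using hv)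
        have h4 : (degTwo E ∩ U).card ≤ U.card := Finset.card_le_card Finset.inter_subset_right
        have h5 := round v U hv hU (by omega)
        have h6 : 3 ∣ 2 * (degTwo E).card := by
          rw [← sum_degTwo]
          refine Finset.dvd_sum fun e he => ?_
          by_cases hne : (degTwo E ∩ e).Nonempty
          · obtain ⟨y, hy⟩ := hne
            rw [Finset.mem_inter] at hy
            have : degTwo E ∩ e = e :=
              Finset.inter_eq_right.mpr fun x hx => hA y hy.1 e he hy.2 x hx
            rw [this, h3 e he]
          · rw [Finset.not_nonempty_iff_eq_empty.mp hne]; simp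
        omega
    · have := gameVal_le_card _ E le_rfl true
      rw [Finset.not_nonempty_iff_eq_empty.mp hQ, Finset.card_empty]
      omega

/-- If `H` is a `3`-uniform hypergraph with maximum degree at most `2`,
then `τ_g(H) ≤ (3/10)(n(H) + m(H))`. -/
theorem gameTransversalNum_le_of_three_uniform_maxDegree_le_two
    {V : Type} [Fintype V] [DecidableEq V] (E : Finset (Finset V))
    (h3 : ∀ e ∈ E, e.card = 3)
    (hΔ : ∀ v : V, (E.filter (fun e => v ∈ e)).card ≤ 2) :
    (gameTransversalNum E : ℚ) ≤ (3 / 10) * (Fintype.card V + E.card) := by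
  have h1 := main_bound _ E le_rfl h3 hΔ
  have h2 := two_degTwo_le E h3
  have h4 := three_card_le E h3 hΔ
  have h1' : 6 * (gameVal true E : ℚ) + (degTwo E).card ≤ 6 * E.card := by exact_mod_cast h1
  have h2' : 2 * ((degTwo E).card : ℚ) ≤ 3 * E.card := by exact_mod_cast h2
  have h4' : 3 * (E.card : ℚ) ≤ Fintype.card V + (degTwo E).card := by exact_mod_cast h4
  unfold gameTransversalNum
  linarith
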